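/- Let (V, w, d) be a finite weighted metric space, X ⊆ V a nonempty subset with |X| = m, and k, k' integers with 1 ≤ k ≤ k' ≤ m. Let cost(S) = ∑_{x∈V} w(x)·min_{y∈S} d(x,y) and OPT_k(V) = min over S* ⊆ V with |S*| = k of cost(S*). Then there exists a subset S ⊆ X with |S| = k' such that cost(S) ≤ cost(X) + ( ∑_{i = k'+1}^{m} 2/(i − k) ) · OPT_k(V). -/

import Mathlib

/-!
The set `S` is reached from `X` by deleting one point at a time. The cost of one deletion is
controlled by `exists_erase_kCost_le`: let `O` be an optimal set of `k` centers and `|S| = i > k`.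
Call `y ∈ S` critical if it is the chosen nearest point of `S` to some point of `O`; at most `k`
points are critical. If a noncritical `y` is deleted, each client `x` served by `y` can be
rerouted to the point of `S` nearest to its center `o` in `O`, which by the triangle inequality
adds at most `2 d(x, O)` to its distance; the other clients are unaffected. Every client is
served by a single center, so the increases of the cost over the at least `i - k` noncritical `y`
add up to at most `2 OPT`, and some `y` has increase at most `2 OPT / (i - k)`. Summing this bound
over `i = m, …, k' + 1` gives the theorem.
-/

open Finset

/-- Distance from a point to a (nonempty) finite set: `min_{y ∈ S} d(x,y)`. -/
noncomputable def distToSet {V : Type*} [MetricSpace V] (x : V) (S : Finset V) : ℝ :=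
  sInf ((fun y => dist x y) '' ↑S)

/-- `k`-median cost of a center set `S` with respect to the point set `U`:
`∑_{x ∈ U} w(x) · d(x, S)`. -/
noncomputable def kCost {V : Type*} [MetricSpace V] (w : V → NNReal) (S U : Finset V) : ℝ :=
  ∑ x ∈ U, (w x : ℝ) * distToSet x S

/-- `OPT_k(U, X)`: minimum over `S ⊆ X` with `|S| = k` of `kCost w S U`. -/
noncomputable def kOPT {V : Type*} [MetricSpace V] (w : V → NNReal) (k : ℕ) (U X : Finset V) : ℝ :=
  sInf {c : ℝ | ∃ S : Finset V, S ⊆ X ∧ S.card = k ∧ c = kCost w S U}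

lemma distToSet_le {V : Type*} [MetricSpace V] {x y : V} {S : Finset V} (hy : y ∈ S) :
    distToSet x S ≤ dist x y :=
  csInf_le ⟨0, by rintro _ ⟨z, -, rfl⟩; exact dist_nonneg⟩ ⟨y, hy, rfl⟩

lemma exists_dist_eq_distToSet {V : Type*} [MetricSpace V] (x : V) {S : Finset V}
    (hS : S.Nonempty) : ∃ y ∈ S, dist x y = distToSet x S :=
  ((hS.to_set).image (fun y => dist x y)).csInf_mem (S.finite_toSet.image _)

lemma distToSet_nonneg {V : Type*} [MetricSpace V] (x : V) (S : Finset V) :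
    0 ≤ distToSet x S :=
  Real.sInf_nonneg (by rintro _ ⟨z, -, rfl⟩; exact dist_nonneg)

lemma kCost_nonneg {V : Type*} [MetricSpace V] (w : V → NNReal) (S U : Finset V) :
    0 ≤ kCost w S U :=
  Finset.sum_nonneg fun x _ => mul_nonneg (w x).2 (distToSet_nonneg x S)

/-- The one-step bound: from any `S` larger than `O`, some point can be deleted at an extra cost
of at most `2 / (|S| - |O|)` times the cost of `O`. -/
lemma exists_erase_kCost_le {V : Type*} [Fintype V] [DecidableEq V] [MetricSpace V]
    (w : V → NNReal) (S O : Finset V) (hO : O.Nonempty) (hOS : O.card < S.card) :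
    ∃ y ∈ S, kCost w (S.erase y) univ ≤
      kCost w S univ + 2 / ((S.card : ℝ) - O.card) * kCost w O univ := by
  have hS : S.Nonempty := Finset.card_pos.mp (by omega)
  choose c hcS hc using fun x => exists_dist_eq_distToSet x hS
  choose o hoO ho using fun x => exists_dist_eq_distToSet x hO
  -- The noncritical points of `S`.
  set A := S \ O.image c with hA
  have hcard : S.card ≤ A.card + O.card := by
    have h1 := Finset.le_card_sdiff (O.image c) S
    rw [← hA] at h1
    have h2 : (O.image c).card ≤ O.card := Finset.card_image_le
    omega
  have hAne : A.Nonempty := Finset.card_pos.mp (by omega)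
  have key : ∀ y ∈ A, ∀ x, distToSet x (S.erase y) ≤
      distToSet x S + if c x = y then 2 * distToSet x O else 0 := by
    intro y hy x
    obtain ⟨-, hyT⟩ := Finset.mem_sdiff.mp hy
    split_ifs with h
    · have hne : c (o x) ≠ y := fun e =>
        hyT (e ▸ Finset.mem_image_of_mem c (hoO x))
      have h1 : distToSet x (S.erase y) ≤ dist x (c (o x)) :=
        distToSet_le (Finset.mem_erase.mpr ⟨hne, hcS _⟩)
      have h2 : dist (o x) (c (o x)) ≤ dist (o x) (c x) :=
        (hc (o x)).trans_le (distToSet_le (hcS x))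
      have h3 := dist_triangle x (o x) (c (o x))
      have h4 := dist_triangle (o x) x (c x)
      rw [dist_comm (o x) x] at h4
      have h5 := ho x
      have h6 := hc x
      linarith
    · rw [add_zero, ← hc x]
      exact distToSet_le (Finset.mem_erase.mpr ⟨h, hcS x⟩)
  have hsum : ∑ y ∈ A, (kCost w (S.erase y) univ - kCost w S univ) ≤ 2 * kCost w O univ := by
    calc ∑ y ∈ A, (kCost w (S.erase y) univ - kCost w S univ)
        ≤ ∑ y ∈ A, ∑ x, (w x : ℝ) * (if c x = y then 2 * distToSet x O else 0) := by
          refine Finset.sum_le_sum fun y hy => ?_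
          rw [kCost, kCost, ← Finset.sum_sub_distrib]
          refine Finset.sum_le_sum fun x _ => ?_
          rw [← mul_sub]
          exact mul_le_mul_of_nonneg_left (by linarith [key y hy x]) (w x).2
      _ = ∑ x, (w x : ℝ) * ∑ y ∈ A, (if c x = y then 2 * distToSet x O else 0) := by
          rw [Finset.sum_comm]
          simp only [Finset.mul_sum]
      _ ≤ ∑ x, (w x : ℝ) * (2 * distToSet x O) := by
          refine Finset.sum_le_sum fun x _ => mul_le_mul_of_nonneg_left ?_ (w x).2
          rw [Finset.sum_ite_eq]
          split_ifs
          · exact le_rfl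
          · linarith [distToSet_nonneg x O]
      _ = 2 * kCost w O univ := by
          rw [kCost, Finset.mul_sum]
          exact Finset.sum_congr rfl fun x _ => by ring
  have hpos : (0 : ℝ) < (S.card : ℝ) - O.card := by
    rw [sub_pos]; exact_mod_cast hOS
  have hle : (S.card : ℝ) - O.card ≤ A.card := by
    rw [sub_le_iff_le_add]; exact_mod_cast hcard
  have hC := kCost_nonneg w O univ
  obtain ⟨y, hyA, hy⟩ := Finset.exists_le_of_sum_le
    (g := fun _ => 2 / ((S.card : ℝ) - O.card) * kCost w O univ) hAne (by
      refine hsum.trans ?_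
      rw [Finset.sum_const, nsmul_eq_mul]
      calc 2 * kCost w O univ
          = ((S.card : ℝ) - O.card) * (2 / ((S.card : ℝ) - O.card) * kCost w O univ) := by
            field_simp
        _ ≤ _ := mul_le_mul_of_nonneg_right hle (by positivity))
  exact ⟨y, (Finset.mem_sdiff.mp hyA).1, by linarith⟩

lemma exists_kCost_eq_kOPT {V : Type*} [MetricSpace V] (w : V → NNReal) {k : ℕ}
    (U X : Finset V) (hk : k ≤ X.card) :
    ∃ O ⊆ X, O.card = k ∧ kCost w O U = kOPT w k U X := by
  have hne : {c : ℝ | ∃ S : Finset V, S ⊆ X ∧ S.card = k ∧ c = kCost w S U}.Nonempty := by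
    obtain ⟨S, hS, hc⟩ := Finset.exists_subset_card_eq hk
    exact ⟨_, S, hS, hc, rfl⟩
  have hfin : {c : ℝ | ∃ S : Finset V, S ⊆ X ∧ S.card = k ∧ c = kCost w S U}.Finite := by
    refine (X.powerset.finite_toSet.image fun S => kCost w S U).subset ?_
    rintro _ ⟨S, hS, -, rfl⟩
    exact ⟨S, by simpa using hS, rfl⟩
  obtain ⟨O, hO, hc, h⟩ := hne.csInf_mem hfin
  exact ⟨O, hO, hc, h.symm⟩

/-- Restricted reverse greedy guarantee for `k`-median: there is `S ⊆ X` with `|S| = k'` and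
`cost(S) ≤ cost(X) + (∑_{i=k'+1}^{m} 2/(i − k)) · OPT_k(V)`. -/
theorem restricted_reverse_greedy_kmedian {V : Type*} [Fintype V] [MetricSpace V]
    (w : V → NNReal) (X : Finset V) (hX : X.Nonempty)
    (m k k' : ℕ) (hm : X.card = m) (hk : 1 ≤ k) (hkk' : k ≤ k') (hk'm : k' ≤ m) :
    ∃ S : Finset V, S ⊆ X ∧ S.card = k' ∧
      kCost w S Finset.univ ≤ kCost w X Finset.univ +
        (∑ i ∈ Finset.Icc (k' + 1) m, 2 / ((i : ℝ) - k)) *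
          kOPT w k Finset.univ Finset.univ := by
  classical
  obtain ⟨O, -, hOk, hO⟩ := exists_kCost_eq_kOPT w (k := k) (Finset.univ : Finset V) Finset.univ
    ((hkk'.trans (hk'm.trans hm.ge)).trans (Finset.card_le_univ X))
  have hOne : O.Nonempty := Finset.card_pos.mp (by omega)
  rw [← hO]
  clear hX
  obtain ⟨n, rfl⟩ := Nat.exists_eq_add_of_le hk'm
  clear hk'm
  induction n generalizing X with
  | zero => exact ⟨X, subset_rfl, hm, by simp⟩
  | succ n ih =>
    obtain ⟨y, hyX, hy⟩ := exists_erase_kCost_le w X O hOne (by omega)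
    obtain ⟨S, hSX, hSk, hS⟩ := ih (X.erase y) (by rw [Finset.card_erase_of_mem hyX]; omega)
    refine ⟨S, hSX.trans (Finset.erase_subset _ _), hSk, ?_⟩
    rw [← add_assoc, Finset.sum_Icc_succ_top (by omega), add_mul]
    rw [hm, hOk, ← add_assoc] at hy
    linarith
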